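/- Define g : ℝ² → ℝ by g(0) = 0 and g(x) = √2 · x₁ x₂ / (|x| · log(−log |x|)) for 0 < |x| < e^{−e}, where |x| = √(x₁² + x₂²). Then g is continuously differentiable on the open ball B(0, e^{−e}) ⊂ ℝ², with ∇g(0) = 0. -/

import Mathlib

open Real Set

/-!
Write `g x = φ ‖x‖ • B x x` with `B` bilinear and `φ r = (r log (-log r))⁻¹`. Such a product is `C¹`
away from the origin, where `g` is of size `O(‖x‖² φ ‖x‖)` and its derivative of size
`O(‖x‖ φ ‖x‖ + ‖x‖² φ' ‖x‖)`. Hence `g` is `C¹` with vanishing derivative at the origin as soon as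
`r φ r` and `r² φ' r` tend to `0` as `r → 0⁺`. For this `φ` both are `O(1 / log (-log r))`: the
double logarithm provides the decay that the bounded but discontinuous gradient of `x₁ x₂ / ‖x‖`
lacks.
-/

open Filter Topology Asymptotics

section Punctured

variable {𝕜 E F : Type*} [NontriviallyNormedField 𝕜] [NormedAddCommGroup E] [NormedSpace 𝕜 E]
  [NormedAddCommGroup F] [NormedSpace 𝕜 F]

lemma contDiffOn_one_of_diff_singleton {f : E → F} {f' : E →L[𝕜] F} {s : Set E} {a : E}
    (hs : IsOpen s) (hf : ContDiffOn 𝕜 1 f (s \ {a})) (hfa : HasFDerivAt f f' a)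
    (hlim : Tendsto (fderiv 𝕜 f) (𝓝[≠] a) (𝓝 f')) : ContDiffOn 𝕜 1 f s := by
  have hf_ne {x : E} (hx : x ∈ s) (hxa : x ≠ a) : ContDiffAt 𝕜 1 f x :=
    hf.contDiffAt ((hs.sdiff isClosed_singleton).mem_nhds ⟨hx, hxa⟩)
  have h_diff : DifferentiableOn 𝕜 f s := by
    intro x hx
    rcases eq_or_ne x a with rfl | hxa
    · exact hfa.differentiableAt.differentiableWithinAt
    · exact ((hf_ne hx hxa).differentiableAt one_ne_zero).differentiableWithinAt
  have h_cont : ContinuousOn (fderiv 𝕜 f) s := by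
    intro x hx
    rcases eq_or_ne x a with rfl | hxa
    · refine ContinuousAt.continuousWithinAt ?_
      rwa [continuousAt_iff_punctured_nhds, hfa.fderiv]
    · exact ((hf_ne hx hxa).continuousAt_fderiv one_ne_zero).continuousWithinAt
  rw [← zero_add 1, contDiffOn_succ_iff_fderiv_of_isOpen hs, contDiffOn_zero]
  exact ⟨h_diff, by simp, h_cont⟩

lemma norm_fderiv_bilinear_diag_le (B : E →L[𝕜] E →L[𝕜] F) (x : E) :
    ‖fderiv 𝕜 (fun y ↦ B y y) x‖ ≤ 2 * ‖B‖ * ‖x‖ := by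
  have h_diag : HasFDerivAt (fun y ↦ B y y) _ x :=
    B.hasFDerivAt_of_bilinear (hasFDerivAt_id x) (hasFDerivAt_id x)
  rw [h_diag.fderiv]
  refine ContinuousLinearMap.opNorm_le_bound _ (by positivity) fun v ↦ ?_
  calc ‖B x v + B v x‖ ≤ ‖B‖ * ‖x‖ * ‖v‖ + ‖B‖ * ‖v‖ * ‖x‖ :=
        norm_add_le_of_le (B.le_opNorm₂ x v) (B.le_opNorm₂ v x)
    _ = 2 * ‖B‖ * ‖x‖ * ‖v‖ := by ring

end Punctured

section RadialFactor

variable {E F : Type*} [NormedAddCommGroup E] [NormedAddCommGroup F] [NormedSpace ℝ F] {φ : ℝ → ℝ}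

lemma hasFDerivAt_zero_radial_smul_bilinear [NormedSpace ℝ E] (B : E →L[ℝ] E →L[ℝ] F)
    (hφ : Tendsto (fun r ↦ r * φ r) (𝓝[>] 0) (𝓝 0)) :
    HasFDerivAt (fun x ↦ φ ‖x‖ • B x x) (0 : E →L[ℝ] F) 0 := by
  have h_small : ContinuousAt (fun x : E ↦ ‖x‖ * φ ‖x‖) 0 := by
    rw [continuousAt_iff_punctured_nhds]
    simpa only [norm_zero, zero_mul, Function.comp_def] using hφ.comp tendsto_norm_nhdsNE_zero
  have h_littleO : (fun x : E ↦ ‖x‖ * φ ‖x‖) =o[𝓝 0] fun _ ↦ (1 : ℝ) := by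
    simpa only [isLittleO_one_iff, ContinuousAt, norm_zero, zero_mul] using h_small
  have h_bigO : (fun x ↦ φ ‖x‖ • B x x) =O[𝓝 0] fun x : E ↦ ‖x‖ * φ ‖x‖ * ‖x‖ := by
    refine .of_bound ‖B‖ (.of_forall fun x ↦ ?_)
    calc ‖φ ‖x‖ • B x x‖ ≤ ‖φ ‖x‖‖ * (‖B‖ * ‖x‖ * ‖x‖) := by
          rw [norm_smul]
          gcongr
          exact B.le_opNorm₂ x x
      _ = ‖B‖ * ‖‖x‖ * φ ‖x‖ * ‖x‖‖ := by
          simp only [norm_mul, norm_norm]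
          ring
  have h_littleO_norm : (fun x ↦ φ ‖x‖ • B x x) =o[𝓝 0] fun x : E ↦ ‖x‖ := by
    simpa only [one_mul] using
      h_bigO.trans_isLittleO (h_littleO.mul_isBigO (isBigO_refl (fun x : E ↦ ‖x‖) _))
  rw [hasFDerivAt_iff_isLittleO_nhds_zero]
  simpa using h_littleO_norm.of_norm_right

variable [InnerProductSpace ℝ E] (B : E →L[ℝ] E →L[ℝ] F)

lemma norm_fderiv_radial_smul_bilinear_le {x : E} (hx : x ≠ 0) (hφ : DifferentiableAt ℝ φ ‖x‖) :
    ‖fderiv ℝ (fun y ↦ φ ‖y‖ • B y y) x‖ ≤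
      ‖B‖ * (2 * |‖x‖ * φ ‖x‖| + |‖x‖ ^ 2 * deriv φ ‖x‖|) := by
  have h_norm : DifferentiableAt ℝ (fun y : E ↦ ‖y‖) x :=
    (contDiffAt_norm ℝ hx (n := 1)).differentiableAt one_ne_zero
  have h_norm_le : ‖fderiv ℝ (fun y : E ↦ ‖y‖) x‖ ≤ 1 := by
    simpa using norm_fderiv_le_of_lipschitz ℝ (x₀ := x) (lipschitzWith_one_norm (E := E))
  have h_diag : DifferentiableAt ℝ (fun y ↦ B y y) x := by fun_prop
  have h_radial : HasFDerivAt (fun y : E ↦ φ ‖y‖) (deriv φ ‖x‖ • fderiv ℝ (fun y : E ↦ ‖y‖) x) x :=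
    hφ.hasDerivAt.comp_hasFDerivAt x h_norm.hasFDerivAt
  rw [(h_radial.fun_smul h_diag.hasFDerivAt).fderiv]
  calc ‖φ ‖x‖ • fderiv ℝ (fun y ↦ B y y) x
          + (deriv φ ‖x‖ • fderiv ℝ (fun y : E ↦ ‖y‖) x).smulRight (B x x)‖
      ≤ |φ ‖x‖| * (2 * ‖B‖ * ‖x‖) + |deriv φ ‖x‖| * 1 * (‖B‖ * ‖x‖ * ‖x‖) := by
        refine norm_add_le_of_le ?_ ?_
        · rw [norm_smul, norm_eq_abs]
          gcongr
          exact norm_fderiv_bilinear_diag_le B x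
        · rw [ContinuousLinearMap.norm_smulRight_apply, norm_smul, norm_eq_abs]
          gcongr
          exact B.le_opNorm₂ x x
    _ = ‖B‖ * (2 * |‖x‖ * φ ‖x‖| + |‖x‖ ^ 2 * deriv φ ‖x‖|) := by
        simp only [abs_mul, abs_pow, abs_norm]
        ring

lemma tendsto_fderiv_radial_smul_bilinear (hφ : ∀ᶠ r in 𝓝[>] 0, DifferentiableAt ℝ φ r)
    (hφ₀ : Tendsto (fun r ↦ r * φ r) (𝓝[>] 0) (𝓝 0))
    (hφ₁ : Tendsto (fun r ↦ r ^ 2 * deriv φ r) (𝓝[>] 0) (𝓝 0)) :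
    Tendsto (fderiv ℝ fun x ↦ φ ‖x‖ • B x x) (𝓝[≠] 0) (𝓝 0) := by
  have h_norm : Tendsto (fun x : E ↦ ‖x‖) (𝓝[≠] 0) (𝓝[>] 0) := tendsto_norm_nhdsNE_zero
  have h_bound : Tendsto (fun r ↦ ‖B‖ * (2 * |r * φ r| + |r ^ 2 * deriv φ r|)) (𝓝[>] 0) (𝓝 0) := by
    simpa using ((hφ₀.abs.const_mul 2).add hφ₁.abs).const_mul ‖B‖
  refine squeeze_zero_norm' ?_ (h_bound.comp h_norm)
  filter_upwards [h_norm.eventually hφ, self_mem_nhdsWithin] with x hφx hx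
  exact norm_fderiv_radial_smul_bilinear_le B hx hφx

theorem contDiffOn_ball_radial_smul_bilinear {R : ℝ} (hR : 0 < R)
    (hφ : ContDiffOn ℝ 1 φ (Ioo 0 R)) (hφ₀ : Tendsto (fun r ↦ r * φ r) (𝓝[>] 0) (𝓝 0))
    (hφ₁ : Tendsto (fun r ↦ r ^ 2 * deriv φ r) (𝓝[>] 0) (𝓝 0)) :
    ContDiffOn ℝ 1 (fun x ↦ φ ‖x‖ • B x x) (Metric.ball 0 R) := by
  have hφ_at {r : ℝ} (hr : r ∈ Ioo 0 R) : ContDiffAt ℝ 1 φ r :=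
    hφ.contDiffAt (isOpen_Ioo.mem_nhds hr)
  refine contDiffOn_one_of_diff_singleton Metric.isOpen_ball ?_
    (hasFDerivAt_zero_radial_smul_bilinear B hφ₀)
    (tendsto_fderiv_radial_smul_bilinear B ?_ hφ₀ hφ₁)
  · rintro x ⟨hxR, hx⟩
    have hxR : ‖x‖ ∈ Ioo 0 R := ⟨norm_pos_iff.2 hx, mem_ball_zero_iff.1 hxR⟩
    have h_diag : ContDiffAt ℝ 1 (fun y ↦ B y y) x := by fun_prop
    exact (((hφ_at hxR).comp x (contDiffAt_norm ℝ hx)).smul h_diag).contDiffWithinAt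
  · filter_upwards [Ioo_mem_nhdsGT hR] with r hr
    exact (hφ_at hr).differentiableAt one_ne_zero

end RadialFactor

section LogLog

/-- The radial profile of the initial vorticity near the origin: the vorticity at `x` is a quadratic
form in `x` multiplied by `vorticityProfile ‖x‖`. The formula is meaningful for `0 < r < e⁻¹`,
where the double logarithm is positive. -/
noncomputable def vorticityProfile (r : ℝ) : ℝ := (r * log (-log r))⁻¹

variable {r : ℝ}

lemma one_lt_neg_log (hr : r ∈ Ioo 0 (exp (-1))) : 1 < -log r :=
  lt_neg_of_lt_neg ((log_lt_iff_lt_exp hr.1).2 hr.2)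

lemma log_neg_log_pos (hr : r ∈ Ioo 0 (exp (-1))) : 0 < log (-log r) :=
  log_pos (one_lt_neg_log hr)

lemma contDiffOn_vorticityProfile : ContDiffOn ℝ 1 vorticityProfile (Ioo 0 (exp (-1))) := by
  intro r hr
  have h_log : ContDiffAt ℝ 1 log r := contDiffAt_log.2 hr.1.ne'
  have h_loglog : ContDiffAt ℝ 1 (fun r ↦ log (-log r)) r :=
    h_log.neg.log (zero_lt_one.trans (one_lt_neg_log hr)).ne'
  exact ((contDiffAt_id.mul h_loglog).inv
    (mul_pos hr.1 (log_neg_log_pos hr)).ne').contDiffWithinAt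

lemma hasDerivAt_vorticityProfile (hr : r ∈ Ioo 0 (exp (-1))) :
    HasDerivAt vorticityProfile
      (-(log (-log r) - (-log r)⁻¹) / (r * log (-log r)) ^ 2) r := by
  have h_neg_log_pos : 0 < -log r := zero_lt_one.trans (one_lt_neg_log hr)
  have h_loglog : HasDerivAt (fun r ↦ log (-log r)) (-r⁻¹ / -log r) r :=
    (hasDerivAt_log hr.1.ne').fun_neg.log h_neg_log_pos.ne'
  have h_inv := ((hasDerivAt_id r).fun_mul h_loglog).fun_inv
    (mul_pos hr.1 (log_neg_log_pos hr)).ne'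
  refine h_inv.congr_deriv ?_
  have hr0 := hr.1.ne'
  congr 2
  simp only [id]
  field_simp
  ring

lemma tendsto_neg_log_nhdsGT_zero : Tendsto (fun r ↦ -log r) (𝓝[>] 0) atTop :=
  tendsto_neg_atBot_atTop.comp tendsto_log_nhdsGT_zero

lemma tendsto_inv_log_neg_log_nhdsGT_zero :
    Tendsto (fun r ↦ (log (-log r))⁻¹) (𝓝[>] 0) (𝓝 0) :=
  (tendsto_log_atTop.comp tendsto_neg_log_nhdsGT_zero).inv_tendsto_atTop

lemma tendsto_mul_vorticityProfile :
    Tendsto (fun r ↦ r * vorticityProfile r) (𝓝[>] 0) (𝓝 0) := by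
  refine tendsto_inv_log_neg_log_nhdsGT_zero.congr' ?_
  filter_upwards [self_mem_nhdsWithin] with r hr
  rw [vorticityProfile, mul_inv, mul_inv_cancel_left₀ (ne_of_gt hr)]

lemma tendsto_sq_mul_deriv_vorticityProfile :
    Tendsto (fun r ↦ r ^ 2 * deriv vorticityProfile r) (𝓝[>] 0) (𝓝 0) := by
  have h_lim : Tendsto (fun r ↦ (-log r)⁻¹ * (log (-log r))⁻¹ ^ 2 - (log (-log r))⁻¹)
      (𝓝[>] 0) (𝓝 0) := by
    simpa using (tendsto_neg_log_nhdsGT_zero.inv_tendsto_atTop.mul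
      (tendsto_inv_log_neg_log_nhdsGT_zero.pow 2)).sub tendsto_inv_log_neg_log_nhdsGT_zero
  refine h_lim.congr' ?_
  filter_upwards [Ioo_mem_nhdsGT (exp_pos (-1))] with r hr
  have hr0 := hr.1.ne'
  have h_loglog := (log_neg_log_pos hr).ne'
  rw [(hasDerivAt_vorticityProfile hr).deriv]
  field_simp
  ring

end LogLog

theorem statement2_general {E F : Type*} [NormedAddCommGroup E] [InnerProductSpace ℝ E]
    [NormedAddCommGroup F] [NormedSpace ℝ F] (B : E →L[ℝ] E →L[ℝ] F) {R : ℝ} (hR₀ : 0 < R)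
    (hR : R ≤ exp (-1)) {g : E → F} (hg₀ : g 0 = 0)
    (hg : ∀ x, 0 < ‖x‖ → ‖x‖ < R → g x = (‖x‖ * log (-log ‖x‖))⁻¹ • B x x) :
    ContDiffOn ℝ 1 g (Metric.ball 0 R) ∧ HasFDerivAt g (0 : E →L[ℝ] F) 0 := by
  have hg_eq : EqOn g (fun x ↦ vorticityProfile ‖x‖ • B x x) (Metric.ball 0 R) := by
    intro x hx
    rcases eq_or_ne x 0 with rfl | hx₀
    · simp [hg₀]
    · exact hg x (norm_pos_iff.2 hx₀) (mem_ball_zero_iff.1 hx)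
  constructor
  · exact (contDiffOn_ball_radial_smul_bilinear B hR₀
      (contDiffOn_vorticityProfile.mono (Ioo_subset_Ioo_right hR)) tendsto_mul_vorticityProfile
      tendsto_sq_mul_deriv_vorticityProfile).congr hg_eq
  · exact (hasFDerivAt_zero_radial_smul_bilinear B
      tendsto_mul_vorticityProfile).congr_of_eventuallyEq
        (hg_eq.eventuallyEq_of_mem (Metric.ball_mem_nhds 0 hR₀))

/-- g(0) = 0 and g(x) = √2·x₁x₂/(|x|·log(−log|x|)) for 0 < |x| < e^{−e}
is continuously differentiable on the Euclidean ball B(0, e^{−e}) ⊂ ℝ², with ∇g(0) = 0. -/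
theorem statement2 (g : EuclideanSpace ℝ (Fin 2) → ℝ) (hg0 : g 0 = 0)
    (hg : ∀ x : EuclideanSpace ℝ (Fin 2), 0 < ‖x‖ → ‖x‖ < Real.exp (-(Real.exp 1)) →
      g x = Real.sqrt 2 * (x 0) * (x 1) / (‖x‖ * Real.log (-Real.log ‖x‖))) :
    ContDiffOn ℝ 1 g (Metric.ball 0 (Real.exp (-(Real.exp 1)))) ∧
    gradient g 0 = 0 := by
  obtain ⟨h_contDiffOn, h_fderiv⟩ := statement2_general
    (√2 • (EuclideanSpace.proj (𝕜 := ℝ) (0 : Fin 2)).smulRight (EuclideanSpace.proj (1 : Fin 2)))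
    (exp_pos _) (exp_le_exp.2 (neg_le_neg (one_le_exp zero_le_one))) hg0
    fun x hx hxR ↦ by
      rw [hg x hx hxR, div_eq_inv_mul]
      simp [mul_assoc]
  exact ⟨h_contDiffOn, by rw [gradient, h_fderiv.fderiv, map_zero]⟩
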